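/- There exist constants c, C > 0 and N such that for every n ≥ N and every F ∈ {M_2, S_1, S_2}, one has c·n ≤ sat_○(n, F) ≤ C·n; that is, sat_○(n, F) = Θ(n) for F ∈ {M_2, S_1, S_2}. -/

import Mathlib

/-!
Both bounds are soft once the right sets of triples are isolated.

*Upper bounds.* Any `F`-free family `H₀` of triples extends to a maximal one, which is `F`-saturated;
if every triple outside a set `B` creates a copy of `F` together with `H₀`, that maximal family lies
inside `B` (`exists_sat_subset`). It therefore suffices to find an `F`-free `H₀` that leaves only
linearly many triples unblocked. For `S₁` and `S₂` take all triples containing the consecutive pair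
`{0, 1}`: any two of them share two points, whereas the edges of `S₁` and `S₂` share only one. For
`M₂` take all triples having at least two points among `{0, 1, 2}`: any two of them intersect, whereas
the edges of `M₂` are disjoint. A short case analysis on the points of a triple
`x < y < z` exhibits the required copies.

*Lower bounds.* The edges of `S₁` (and of `S₂`) share a vertex, so a triple of isolated vertices
creates no copy; hence a saturated family has at most two isolated vertices and at least
`(n - 2) / 3` edges (`le_card_of_shared`). In `M₂` neither edge consists of three cyclically
consecutive vertices, so a triple `{i, i + 1, i + 2}` never lies in a copy, and a saturated family
contains all of them (`le_card_M2`).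
-/

open Finset

/-- An abstract convex geometric hypergraph: `m` vertices on a circle, with the
cyclic ordering `0 < 1 < ⋯ < m-1 < 0`, together with a family of edges. -/
structure CGH where
  m : ℕ
  edges : Finset (Finset (Fin m))

/-- A list of points of `Fin n` is in (strict) cyclic order if some rotation of it
is strictly increasing in the linear order of `Fin n`. -/
def CyclicSorted {n : ℕ} (l : List (Fin n)) : Prop :=
  ∃ k : ℕ, (l.rotate k).Chain' (· < ·)

/-- `H` contains a subhypergraph isomorphic to the convex geometric hypergraph `F`:
there is an injection of the vertices of `F` into `Fin n` respecting the cyclic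
orderings and sending every edge of `F` to an edge of `H`. -/
def HasCopy (F : CGH) {n : ℕ} (H : Finset (Finset (Fin n))) : Prop :=
  ∃ f : Fin F.m → Fin n, Function.Injective f ∧ CyclicSorted (List.ofFn f) ∧
    ∀ e ∈ F.edges, e.image f ∈ H

/-- `H` is an `F`-saturated `r`-uniform convex geometric hypergraph on `Fin n`. -/
def IsSat (F : CGH) (r : ℕ) {n : ℕ} (H : Finset (Finset (Fin n))) : Prop :=
  (∀ h ∈ H, h.card = r) ∧ ¬ HasCopy F H ∧
    ∀ e : Finset (Fin n), e.card = r → e ∉ H → HasCopy F (insert e H)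

/-- The saturation number `sat_○(n, F)` for `r`-uniform cgh's on `Fin n`. -/
noncomputable def satNum (F : CGH) (r n : ℕ) : ℕ :=
  sInf {k | ∃ H : Finset (Finset (Fin n)), IsSat F r H ∧ H.card = k}

/-- `M_1^{(r)}`: two geometrically disjoint `r`-tuples. -/
def M1r (r : ℕ) : CGH where
  m := 2 * r
  edges := {Finset.univ.filter (fun i : Fin (2 * r) => (i : ℕ) < r),
            Finset.univ.filter (fun i : Fin (2 * r) => r ≤ (i : ℕ))}

def M1cgh : CGH := ⟨6, {({0, 1, 2} : Finset (Fin 6)), ({3, 4, 5} : Finset (Fin 6))}⟩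
def M2cgh : CGH := ⟨6, {({0, 1, 3} : Finset (Fin 6)), ({2, 4, 5} : Finset (Fin 6))}⟩
def M3cgh : CGH := ⟨6, {({0, 2, 4} : Finset (Fin 6)), ({1, 3, 5} : Finset (Fin 6))}⟩
def S1cgh : CGH := ⟨5, {({0, 1, 4} : Finset (Fin 5)), ({0, 2, 3} : Finset (Fin 5))}⟩
def S2cgh : CGH := ⟨5, {({0, 1, 2} : Finset (Fin 5)), ({0, 3, 4} : Finset (Fin 5))}⟩
def S3cgh : CGH := ⟨5, {({0, 1, 3} : Finset (Fin 5)), ({0, 2, 4} : Finset (Fin 5))}⟩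
def D1cgh : CGH := ⟨4, {({0, 1, 2} : Finset (Fin 4)), ({0, 2, 3} : Finset (Fin 4))}⟩
def D2cgh : CGH := ⟨4, {({0, 1, 2} : Finset (Fin 4)), ({0, 1, 3} : Finset (Fin 4))}⟩

/-- The closed clockwise arc `[a, b]` in `Fin n`. -/
def arcCC {n : ℕ} (a b : Fin n) : Finset (Fin n) :=
  if a ≤ b then Finset.univ.filter (fun x => a ≤ x ∧ x ≤ b)
  else Finset.univ.filter (fun x => a ≤ x ∨ x ≤ b)

/-- The open clockwise arc `(a, b)` in `Fin n`. -/
def arcOO {n : ℕ} (a b : Fin n) : Finset (Fin n) :=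
  if a < b then Finset.univ.filter (fun x => a < x ∧ x < b)
  else Finset.univ.filter (fun x => a < x ∨ x < b)

/-- The tuple `(w_1, …, w_{2ℓ+1})` (`0`-indexed here) consists of distinct points with
`w_1 < w_3 < ⋯ < w_{2ℓ+1} < w_2 < w_4 < ⋯ < w_{2ℓ} < w_1` in the cyclic order. -/
def SemiValid {n : ℕ} (ℓ : ℕ) (w : Fin (2 * ℓ + 1) → Fin n) : Prop :=
  Function.Injective w ∧
    CyclicSorted (List.ofFn fun p : Fin (2 * ℓ + 1) =>
      w ⟨(2 * (p : ℕ)) % (2 * ℓ + 1), Nat.mod_lt _ (by omega)⟩)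

/-- A semi-valid tuple is `r`-valid if moreover `|[w_i, w_{i-1}]| ≥ r` for all `i`. -/
def RValid {n : ℕ} (r ℓ : ℕ) (w : Fin (2 * ℓ + 1) → Fin n) : Prop :=
  SemiValid ℓ w ∧ ∀ i : Fin (2 * ℓ + 1), r ≤ (arcCC (w i) (w (i - 1))).card

/-- `H_n^{(r)}(C)`: all `r`-sets meeting every interval `[w_i, w_{i-1}]`. -/
def HnC {n : ℕ} (r ℓ : ℕ) (w : Fin (2 * ℓ + 1) → Fin n) : Finset (Finset (Fin n)) :=
  (Finset.powersetCard r Finset.univ).filter fun e =>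
    ∀ i : Fin (2 * ℓ + 1), (e ∩ arcCC (w i) (w (i - 1))).Nonempty

/-- `j` is the vertex `λ(v)` for `v` in `H`. -/
def IsLam {n : ℕ} [NeZero n] (H : Finset (Finset (Fin n))) (v j : Fin n) : Prop :=
  (∃ h ∈ H, v ∈ h ∧ h ⊆ arcCC j v) ∧ ¬ ∃ h ∈ H, v ∈ h ∧ h ⊆ arcCC (j + 1) v

/-- `j` is the vertex `ρ(v)` for `v` in `H`. -/
def IsRho {n : ℕ} [NeZero n] (H : Finset (Finset (Fin n))) (v j : Fin n) : Prop :=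
  (∃ h ∈ H, v ∈ h ∧ h ⊆ arcCC v j) ∧ ¬ ∃ h ∈ H, v ∈ h ∧ h ⊆ arcCC v (j - 1)

noncomputable def lamF {n : ℕ} [NeZero n] (H : Finset (Finset (Fin n))) (v : Fin n) : Fin n :=
  letI := Classical.propDecidable (∃ j, IsLam H v j)
  if h : ∃ j, IsLam H v j then h.choose else v

noncomputable def rhoF {n : ℕ} [NeZero n] (H : Finset (Finset (Fin n))) (v : Fin n) : Fin n :=
  letI := Classical.propDecidable (∃ j, IsRho H v j)
  if h : ∃ j, IsRho H v j then h.choose else v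

/-- Strict cyclic betweenness on `Fin n`. -/
def CyclicSbtw {n : ℕ} (a b c : Fin n) : Prop :=
  (a < b ∧ b < c) ∨ (b < c ∧ c < a) ∨ (c < a ∧ a < b)

/-- Isomorphism of two cgh's on `Fin n`: a bijection of the vertex set respecting the
cyclic order and inducing a bijection of the edge sets. -/
def CGHIso {n : ℕ} (H H' : Finset (Finset (Fin n))) : Prop :=
  ∃ g : Fin n ≃ Fin n,
    (∀ a b c : Fin n, CyclicSbtw a b c → CyclicSbtw (g a) (g b) (g c)) ∧
    ∀ e : Finset (Fin n), e ∈ H ↔ e.image g ∈ H'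

/-- The 3-cgh `H_n^{(3)}`: all triples containing `v_0`, together with all triples
containing one of the pairs `{v_1, v_{n-2}}`, `{v_1, v_{n-1}}`, `{v_2, v_{n-1}}`. -/
def Hn3 (n : ℕ) (hn : 6 ≤ n) : Finset (Finset (Fin n)) :=
  (Finset.powersetCard 3 Finset.univ).filter fun e =>
    (⟨0, by omega⟩ : Fin n) ∈ e ∨
    ((⟨1, by omega⟩ : Fin n) ∈ e ∧ (⟨n - 2, by omega⟩ : Fin n) ∈ e) ∨
    ((⟨1, by omega⟩ : Fin n) ∈ e ∧ (⟨n - 1, by omega⟩ : Fin n) ∈ e) ∨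
    ((⟨2, by omega⟩ : Fin n) ∈ e ∧ (⟨n - 1, by omega⟩ : Fin n) ∈ e)

/-- Saturation with respect to a family of cgh's. -/
def FamSat (ℱ : Set CGH) (r : ℕ) {n : ℕ} (H : Finset (Finset (Fin n))) : Prop :=
  (∀ h ∈ H, h.card = r) ∧ (∀ F ∈ ℱ, ¬ HasCopy F H) ∧
    ∀ e : Finset (Fin n), e.card = r → e ∉ H → ∃ F ∈ ℱ, HasCopy F (insert e H)

noncomputable def famSatNum (ℱ : Set CGH) (r n : ℕ) : ℕ :=
  sInf {k | ∃ H : Finset (Finset (Fin n)), FamSat ℱ r H ∧ H.card = k}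

/-- Rotation of a point of `Fin n` by an integer amount `m`. -/
def finShift {n : ℕ} (hn : 0 < n) (v : Fin n) (m : ℤ) : Fin n :=
  ⟨(((v : ℤ) + m) % (n : ℤ)).toNat, by
    have h0 : (0 : ℤ) < (n : ℤ) := by exact_mod_cast hn
    have h1 := Int.emod_nonneg ((v : ℤ) + m) (by omega : (n : ℤ) ≠ 0)
    have h2 := Int.emod_lt_of_pos ((v : ℤ) + m) h0
    omega⟩

/-- The tuple `w` is `(i,k)`-consecutive: starting from position `i`, the entries at
positions `i, i+2, …, i+2(k-1)` are `k` consecutive points `v_j, v_{j+1}, …, v_{j+k-1}`. -/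
def ConsecAt {n ℓ : ℕ} (hn : 0 < n) (w : Fin (2 * ℓ + 1) → Fin n)
    (i : Fin (2 * ℓ + 1)) (k : ℕ) : Prop :=
  ∃ j : Fin n, ∀ s : ℕ, s < k →
    w (i + ⟨(2 * s) % (2 * ℓ + 1), Nat.mod_lt _ (by omega)⟩) = finShift hn j s

/-- The tuple `C_{i,k,m}`: the `k` consecutive points at positions `i, i+2, …, i+2(k-1)`
are rotated by `m` units; all other entries are unchanged. -/
def shiftTuple {n ℓ : ℕ} (hn : 0 < n) (w : Fin (2 * ℓ + 1) → Fin n)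
    (i : Fin (2 * ℓ + 1)) (k : ℕ) (m : ℤ) : Fin (2 * ℓ + 1) → Fin n :=
  fun p => if (p - i).val % 2 = 0 ∧ (p - i).val / 2 < k then finShift hn (w p) m else w p

theorem HasCopy.mono {F : CGH} {n : ℕ} {H H' : Finset (Finset (Fin n))} (h : H ⊆ H')
    (hc : HasCopy F H) : HasCopy F H' := by
  obtain ⟨f, h1, h2, h3⟩ := hc
  exact ⟨f, h1, h2, fun e he => h (h3 e he)⟩

theorem hasCopy_pair {m n : ℕ} {E₁ E₂ : Finset (Fin m)} {H : Finset (Finset (Fin n))} :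
    HasCopy ⟨m, {E₁, E₂}⟩ H ↔ ∃ f : Fin m → Fin n, Function.Injective f ∧
      CyclicSorted (List.ofFn f) ∧ E₁.image f ∈ H ∧ E₂.image f ∈ H := by
  simp [HasCopy]

theorem cyclicSorted_iff {n : ℕ} {l : List (Fin n)} :
    CyclicSorted l ↔ ∃ k : ℕ, (l.rotate k).IsChain (· < ·) := Iff.rfl

/-! ### Saturated families with few edges -/

/-- If every triple outside `B` completes a copy of `F` with the `F`-free family `H₀`, then a maximal
`F`-free family of triples containing `H₀` is saturated and contained in `B`. -/
theorem exists_sat_subset (F : CGH) {n : ℕ} (H₀ B : Finset (Finset (Fin n)))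
    (hu : ∀ h ∈ H₀, h.card = 3) (hfree : ¬ HasCopy F H₀)
    (hB : ∀ e : Finset (Fin n), e.card = 3 → e ∉ B → HasCopy F (insert e H₀)) :
    ∃ H, IsSat F 3 H ∧ H ⊆ B := by
  classical
  let P : Finset (Finset (Fin n)) → Prop := fun H => (∀ h ∈ H, h.card = 3) ∧ ¬ HasCopy F H
  obtain ⟨H, hle, hH⟩ := (Set.toFinite {H | P H}).exists_le_maximal (a := H₀) ⟨hu, hfree⟩
  refine ⟨H, ⟨hH.prop.1, hH.prop.2, fun e he heH => ?_⟩, fun e he => ?_⟩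
  · by_contra hc
    have : P (insert e H) := ⟨by
      intro h hh
      rcases Finset.mem_insert.1 hh with rfl | hh
      · exact he
      · exact hH.prop.1 h hh, hc⟩
    exact heH (hH.le_of_ge this (Finset.subset_insert e H) (Finset.mem_insert_self e H))
  · by_contra heB
    exact hH.prop.2 ((hB e (hH.prop.1 e he) heB).mono (Finset.insert_subset he hle))

theorem exists_sorted {n : ℕ} {e : Finset (Fin n)} (he : e.card = 3) :
    ∃ x y z : Fin n, x < y ∧ y < z ∧ e = {x, y, z} := by
  refine ⟨e.orderEmbOfFin he 0, e.orderEmbOfFin he 1, e.orderEmbOfFin he 2, by simp, by simp, ?_⟩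
  rw [← Finset.coe_inj, ← Finset.range_orderEmbOfFin e he]
  ext a
  simp only [Set.mem_range, Fin.exists_fin_succ, coe_insert, coe_singleton, Set.mem_insert_iff,
    Set.mem_singleton_iff]
  simp [eq_comm]

/-- Cyclic order of five points, split according to which of them comes first in `Fin n`. -/
def Cyc5 {n : ℕ} (a b c d e : Fin n) : Prop :=
  (a < b ∧ b < c ∧ c < d ∧ d < e) ∨ (b < c ∧ c < d ∧ d < e ∧ e < a) ∨
  (c < d ∧ d < e ∧ e < a ∧ a < b) ∨ (d < e ∧ e < a ∧ a < b ∧ b < c) ∨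
  (e < a ∧ a < b ∧ b < c ∧ c < d)

/-- Cyclic order of six points, split according to which of them comes first in `Fin n`. -/
def Cyc6 {n : ℕ} (a b c d e f : Fin n) : Prop :=
  (a < b ∧ b < c ∧ c < d ∧ d < e ∧ e < f) ∨ (b < c ∧ c < d ∧ d < e ∧ e < f ∧ f < a) ∨
  (c < d ∧ d < e ∧ e < f ∧ f < a ∧ a < b) ∨ (d < e ∧ e < f ∧ f < a ∧ a < b ∧ b < c) ∨
  (e < f ∧ f < a ∧ a < b ∧ b < c ∧ c < d) ∨ (f < a ∧ a < b ∧ b < c ∧ c < d ∧ d < e)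

theorem Cyc5.sorted {n : ℕ} {a b c d e : Fin n} (h : Cyc5 a b c d e) :
    Function.Injective ![a, b, c, d, e] ∧ CyclicSorted (List.ofFn ![a, b, c, d, e]) := by
  constructor
  · rw [← List.nodup_ofFn]
    unfold Cyc5 at h
    simp [List.ofFn_succ]
    omega
  · rw [cyclicSorted_iff]
    rcases h with h | h | h | h | h
    · exact ⟨0, by simp [List.ofFn_succ, h]⟩
    · exact ⟨1, by simp [List.ofFn_succ, h]⟩
    · exact ⟨2, by simp [List.ofFn_succ, h]⟩
    · exact ⟨3, by simp [List.ofFn_succ, h]⟩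
    · exact ⟨4, by simp [List.ofFn_succ, h]⟩

theorem Cyc6.sorted {n : ℕ} {a b c d e f : Fin n} (h : Cyc6 a b c d e f) :
    Function.Injective ![a, b, c, d, e, f] ∧ CyclicSorted (List.ofFn ![a, b, c, d, e, f]) := by
  constructor
  · rw [← List.nodup_ofFn]
    unfold Cyc6 at h
    simp [List.ofFn_succ]
    omega
  · rw [cyclicSorted_iff]
    rcases h with h | h | h | h | h | h
    · exact ⟨0, by simp [List.ofFn_succ, h]⟩
    · exact ⟨1, by simp [List.ofFn_succ, h]⟩
    · exact ⟨2, by simp [List.ofFn_succ, h]⟩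
    · exact ⟨3, by simp [List.ofFn_succ, h]⟩
    · exact ⟨4, by simp [List.ofFn_succ, h]⟩
    · exact ⟨5, by simp [List.ofFn_succ, h]⟩

theorem cyc6_of_cyclicSorted {n : ℕ} {g : Fin 6 → Fin n} (h : CyclicSorted (List.ofFn g)) :
    Cyc6 (g 0) (g 1) (g 2) (g 3) (g 4) (g 5) := by
  obtain ⟨k, hk⟩ := cyclicSorted_iff.1 h
  rw [← List.rotate_mod] at hk
  have hlt : k % (List.ofFn g).length < 6 := by
    simpa using Nat.mod_lt k (by norm_num : 0 < 6)
  generalize k % (List.ofFn g).length = j at hk hlt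
  unfold Cyc6
  interval_cases j <;> simp [List.ofFn_succ] at hk <;> tauto

theorem copy_S1 {n : ℕ} {G : Finset (Finset (Fin n))} (a b c d e : Fin n) (h : Cyc5 a b c d e)
    (h1 : {a, b, e} ∈ G) (h2 : {a, c, d} ∈ G) : HasCopy S1cgh G := by
  refine hasCopy_pair.2 ⟨![a, b, c, d, e], h.sorted.1, h.sorted.2, ?_, ?_⟩
  · simpa [Finset.image_insert] using h1
  · simpa [Finset.image_insert] using h2

theorem copy_S2 {n : ℕ} {G : Finset (Finset (Fin n))} (a b c d e : Fin n) (h : Cyc5 a b c d e)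
    (h1 : {a, b, c} ∈ G) (h2 : {a, d, e} ∈ G) : HasCopy S2cgh G := by
  refine hasCopy_pair.2 ⟨![a, b, c, d, e], h.sorted.1, h.sorted.2, ?_, ?_⟩
  · simpa [Finset.image_insert] using h1
  · simpa [Finset.image_insert] using h2

theorem copy_M2 {n : ℕ} {G : Finset (Finset (Fin n))} (a b c d e f : Fin n)
    (h : Cyc6 a b c d e f)
    (h1 : {a, b, d} ∈ G) (h2 : {c, e, f} ∈ G) : HasCopy M2cgh G := by
  refine hasCopy_pair.2 ⟨![a, b, c, d, e, f], h.sorted.1, h.sorted.2, ?_, ?_⟩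
  · simpa [Finset.image_insert] using h1
  · simpa [Finset.image_insert] using h2

/-- All triples that contain two given points. -/
def pairStar {n : ℕ} (a b : Fin n) : Finset (Finset (Fin n)) :=
  (univ.filter fun e => e.card = 3 ∧ a ∈ e ∧ b ∈ e)

theorem mem_pairStar {n : ℕ} {a b : Fin n} {e : Finset (Fin n)} :
    e ∈ pairStar a b ↔ e.card = 3 ∧ a ∈ e ∧ b ∈ e := by simp [pairStar]

theorem triple_mem_pairStar {n : ℕ} {a b x y z : Fin n} (hxy : x ≠ y) (hxz : x ≠ z) (hyz : y ≠ z)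
    (ha : a = x ∨ a = y ∨ a = z) (hb : b = x ∨ b = y ∨ b = z) :
    ({x, y, z} : Finset (Fin n)) ∈ pairStar a b := by
  rw [mem_pairStar]
  exact ⟨Finset.card_eq_three.2 ⟨x, y, z, hxy, hxz, hyz, rfl⟩, by simpa using ha, by simpa using hb⟩

theorem card_pairStar_le {n : ℕ} {a b : Fin n} (hab : a ≠ b) : (pairStar a b).card ≤ n := by
  calc (pairStar a b).card
      ≤ ((univ : Finset (Fin n)).image fun i => ({a, b, i} : Finset (Fin n))).card := by
        apply Finset.card_le_card
        intro e he
        rw [mem_pairStar] at he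
        obtain ⟨h3, ha, hb⟩ := he
        have hcard : (e \ {a, b}).card = 1 := by
          rw [Finset.card_sdiff_of_subset (by simp [Finset.insert_subset_iff, ha, hb]),
            Finset.card_pair hab, h3]
        obtain ⟨i, hi⟩ := Finset.card_eq_one.1 hcard
        refine Finset.mem_image.2 ⟨i, Finset.mem_univ _, ?_⟩
        have := Finset.union_sdiff_of_subset
          (show ({a, b} : Finset (Fin n)) ⊆ e by simp [Finset.insert_subset_iff, ha, hb])
        rw [← this, hi]
        ext; simp
    _ ≤ (univ : Finset (Fin n)).card := Finset.card_image_le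
    _ = n := by simp

/-- A pair of edges meeting in a single vertex does not occur among the triples through two fixed
points, since any two of those share both points. -/
theorem not_hasCopy_pairStar {m : ℕ} {E₁ E₂ : Finset (Fin m)} {v : Fin m}
    (hv : E₁ ∩ E₂ = {v}) {n : ℕ} {a b : Fin n} (hab : a ≠ b) :
    ¬ HasCopy ⟨m, {E₁, E₂}⟩ (pairStar a b) := by
  rw [hasCopy_pair]
  rintro ⟨f, hf, -, h1, h2⟩
  obtain ⟨-, a1, b1⟩ := mem_pairStar.1 h1
  obtain ⟨-, a2, b2⟩ := mem_pairStar.1 h2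
  have ha := Finset.mem_inter.2 ⟨a1, a2⟩
  have hb := Finset.mem_inter.2 ⟨b1, b2⟩
  rw [← Finset.image_inter _ _ hf, hv] at ha hb
  simp only [Finset.image_singleton, Finset.mem_singleton] at ha hb
  exact hab (ha.trans hb.symm)

/-- With `H₀` the triples through `{0, 1}`, a triple `x < y < z` is blocked unless it contains one of
`{0, 1}`, `{0, n - 1}`, `{1, 2}`. -/
theorem upper_S1 {n : ℕ} (hn : 10 ≤ n) :
    ∃ H : Finset (Finset (Fin n)), IsSat S1cgh 3 H ∧ H.card ≤ 3 * n := by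
  obtain ⟨o, ho⟩ : ∃ o : Fin n, o.val = 0 := ⟨⟨0, by omega⟩, rfl⟩
  obtain ⟨t, ht⟩ : ∃ o : Fin n, o.val = 1 := ⟨⟨1, by omega⟩, rfl⟩
  obtain ⟨w, hw⟩ : ∃ o : Fin n, o.val = 2 := ⟨⟨2, by omega⟩, rfl⟩
  obtain ⟨m, hm⟩ : ∃ o : Fin n, o.val = n - 1 := ⟨⟨n - 1, by omega⟩, rfl⟩
  refine (exists_sat_subset S1cgh (pairStar o t)
    (pairStar o t ∪ pairStar o m ∪ pairStar t w) (fun h hh => (mem_pairStar.1 hh).1) ?_ ?_).imp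
    fun H hH => ⟨hH.1, (Finset.card_le_card hH.2).trans ?_⟩
  · exact not_hasCopy_pairStar (E₁ := {0, 1, 4}) (E₂ := {0, 2, 3}) (v := 0) (by decide)
      (show o ≠ t by omega)
  · intro e he heB
    obtain ⟨x, y, z, hxy, hyz, rfl⟩ := exists_sorted he
    simp only [Finset.mem_union, mem_pairStar, he, true_and, Finset.mem_insert,
      Finset.mem_singleton, not_or] at heB
    by_cases hx0 : x = o
    · subst hx0
      refine copy_S1 x t y z m (.inl ?_) (Finset.mem_insert_of_mem ?_) (Finset.mem_insert_self _ _)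
      · omega
      · exact triple_mem_pairStar (by omega) (by omega) (by omega) (by simp) (by simp)
    by_cases hx1 : x = t
    · subst hx1
      refine copy_S1 x w y z o ?_ (Finset.mem_insert_of_mem ?_) (Finset.mem_insert_self _ _)
      · unfold Cyc5; omega
      · exact triple_mem_pairStar (by omega) (by omega) (by omega) (by simp) (by simp)
    refine copy_S1 y z o t x ?_ (Finset.mem_insert.2 (.inl ?_)) (Finset.mem_insert_of_mem ?_)
    · unfold Cyc5; omega
    · ext; simp; tauto
    · exact triple_mem_pairStar (by omega) (by omega) (by omega) (by simp) (by simp)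
  · have h1 := card_pairStar_le (show o ≠ t by omega)
    have h2 := card_pairStar_le (show o ≠ m by omega)
    have h3 := card_pairStar_le (show t ≠ w by omega)
    have h4 := Finset.card_union_le (pairStar o t ∪ pairStar o m) (pairStar t w)
    have h5 := Finset.card_union_le (pairStar o t) (pairStar o m)
    omega

/-- With `H₀` the triples through `{0, 1}`, a triple `x < y < z` is blocked unless it contains one of
`{0, 1}`, `{0, 2}`, `{1, n - 1}`. -/
theorem upper_S2 {n : ℕ} (hn : 10 ≤ n) :
    ∃ H : Finset (Finset (Fin n)), IsSat S2cgh 3 H ∧ H.card ≤ 3 * n := by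
  obtain ⟨o, ho⟩ : ∃ o : Fin n, o.val = 0 := ⟨⟨0, by omega⟩, rfl⟩
  obtain ⟨t, ht⟩ : ∃ o : Fin n, o.val = 1 := ⟨⟨1, by omega⟩, rfl⟩
  obtain ⟨w, hw⟩ : ∃ o : Fin n, o.val = 2 := ⟨⟨2, by omega⟩, rfl⟩
  obtain ⟨m, hm⟩ : ∃ o : Fin n, o.val = n - 1 := ⟨⟨n - 1, by omega⟩, rfl⟩
  refine (exists_sat_subset S2cgh (pairStar o t)
    (pairStar o t ∪ pairStar o w ∪ pairStar t m) (fun h hh => (mem_pairStar.1 hh).1) ?_ ?_).imp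
    fun H hH => ⟨hH.1, (Finset.card_le_card hH.2).trans ?_⟩
  · exact not_hasCopy_pairStar (E₁ := {0, 1, 2}) (E₂ := {0, 3, 4}) (v := 0) (by decide)
      (show o ≠ t by omega)
  · intro e he heB
    obtain ⟨x, y, z, hxy, hyz, rfl⟩ := exists_sorted he
    simp only [Finset.mem_union, mem_pairStar, he, true_and, Finset.mem_insert,
      Finset.mem_singleton, not_or] at heB
    by_cases hx0 : x = o
    · subst hx0
      refine copy_S2 x t w y z (.inl ?_) (Finset.mem_insert_of_mem ?_) (Finset.mem_insert_self _ _)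
      · omega
      · exact triple_mem_pairStar (by omega) (by omega) (by omega) (by simp) (by simp)
    by_cases hx1 : x = t
    · subst hx1
      refine copy_S2 x y z m o ?_ (Finset.mem_insert_self _ _) (Finset.mem_insert_of_mem ?_)
      · unfold Cyc5; omega
      · exact triple_mem_pairStar (by omega) (by omega) (by omega) (by simp) (by simp)
    refine copy_S2 x y z o t ?_ (Finset.mem_insert_self _ _) (Finset.mem_insert_of_mem ?_)
    · unfold Cyc5; omega
    · exact triple_mem_pairStar (by omega) (by omega) (by omega) (by simp) (by simp)
  · have h1 := card_pairStar_le (show o ≠ t by omega)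
    have h2 := card_pairStar_le (show o ≠ w by omega)
    have h3 := card_pairStar_le (show t ≠ m by omega)
    have h4 := Finset.card_union_le (pairStar o t ∪ pairStar o w) (pairStar t m)
    have h5 := Finset.card_union_le (pairStar o t) (pairStar o w)
    omega

/-- The three consecutive points `i, i + 1, i + 2`, without wrapping around: the set is smaller for the
last two values of `i`. -/
def window {n : ℕ} (i : Fin n) : Finset (Fin n) :=
  univ.filter fun j => i ≤ j ∧ j.val ≤ i.val + 2

/-- With `H₀` the triples having two points among `{0, 1, 2}`, a triple is blocked unless it lies in
`H₀`, consists of three consecutive points, or contains `{0, n - 1}` or `{1, n - 1}`. -/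
theorem upper_M2 {n : ℕ} (hn : 10 ≤ n) :
    ∃ H : Finset (Finset (Fin n)), IsSat M2cgh 3 H ∧ H.card ≤ 6 * n := by
  obtain ⟨o, ho⟩ : ∃ o : Fin n, o.val = 0 := ⟨⟨0, by omega⟩, rfl⟩
  obtain ⟨t, ht⟩ : ∃ o : Fin n, o.val = 1 := ⟨⟨1, by omega⟩, rfl⟩
  obtain ⟨w, hw⟩ : ∃ o : Fin n, o.val = 2 := ⟨⟨2, by omega⟩, rfl⟩
  obtain ⟨m, hm⟩ : ∃ o : Fin n, o.val = n - 1 := ⟨⟨n - 1, by omega⟩, rfl⟩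
  have hot : o ≠ t := by omega
  have how : o ≠ w := by omega
  have htw : t ≠ w := by omega
  refine (exists_sat_subset M2cgh (pairStar o t ∪ pairStar o w ∪ pairStar t w)
    (pairStar o t ∪ pairStar o w ∪ pairStar t w ∪ pairStar o m ∪ pairStar t m ∪ univ.image window)
    ?_ ?_ ?_).imp
    fun H hH => ⟨hH.1, (Finset.card_le_card hH.2).trans ?_⟩
  · intro h hh
    simp only [Finset.mem_union, mem_pairStar] at hh
    tauto
  · intro hc
    obtain ⟨f, hf, -, h1, h2⟩ := hasCopy_pair.1 hc
    have hd : ∀ p, p ∈ Finset.image f {0, 1, 3} → p ∈ Finset.image f {2, 4, 5} → False := by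
      intro p hp hq
      have := Finset.mem_inter.2 ⟨hp, hq⟩
      rw [← Finset.image_inter _ _ hf] at this
      rw [show ({0, 1, 3} ∩ {2, 4, 5} : Finset (Fin 6)) = ∅ by decide] at this
      simp at this
    have d1 := hd o
    have d2 := hd t
    have d3 := hd w
    simp only [Finset.mem_union, mem_pairStar] at h1 h2
    tauto
  · intro e he heB
    obtain ⟨x, y, z, hxy, hyz, rfl⟩ := exists_sorted he
    simp only [Finset.mem_union, mem_pairStar, he, true_and, Finset.mem_insert,
      Finset.mem_singleton, not_or] at heB
    obtain ⟨heB, hwin⟩ := heB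
    have b0 : x = o → y ≠ t ∧ y ≠ w ∧ z ≠ m := by
      rintro rfl
      refine ⟨?_, ?_, ?_⟩ <;> rintro rfl <;> simp at heB
    have b1 : x = t → y ≠ w ∧ z ≠ m := by
      rintro rfl
      refine ⟨?_, ?_⟩ <;> rintro rfl <;> simp at heB
    clear heB
    by_cases hx0 : x = o
    · subst hx0
      refine copy_M2 y z m x t w ?_ (Finset.mem_insert.2 (.inl ?_)) (Finset.mem_insert_of_mem ?_)
      · unfold Cyc6; omega
      · ext; simp; tauto
      · exact Finset.mem_union_right _
          (triple_mem_pairStar (by omega) (by omega) (by omega) (by simp) (by simp))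
    by_cases hx1 : x = t
    · subst hx1
      refine copy_M2 m o x w y z ?_ (Finset.mem_insert_of_mem ?_) (Finset.mem_insert_self _ _)
      · unfold Cyc6; omega
      · exact Finset.mem_union_left _ (Finset.mem_union_right _
          (triple_mem_pairStar (by omega) (by omega) (by omega) (by simp) (by simp)))
    -- A triple missing `0` and `1` is crossed by `{0, 1, j}` as soon as some `j ≠ y` lies in `(x, z)`.
    by_cases hgap : x.val + 1 < y.val
    · obtain ⟨j, hj⟩ : ∃ j : Fin n, j.val = x.val + 1 := ⟨⟨x.val + 1, by omega⟩, rfl⟩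
      refine copy_M2 o t x j y z ?_ (Finset.mem_insert_of_mem ?_) (Finset.mem_insert_self _ _)
      · unfold Cyc6; omega
      · exact Finset.mem_union_left _ (Finset.mem_union_left _
          (triple_mem_pairStar (by omega) (by omega) (by omega) (by simp) (by simp)))
    by_cases hgap' : y.val + 1 < z.val
    · obtain ⟨j, hj⟩ : ∃ j : Fin n, j.val = y.val + 1 := ⟨⟨y.val + 1, by omega⟩, rfl⟩
      refine copy_M2 x y j z o t ?_ (Finset.mem_insert_self _ _) (Finset.mem_insert_of_mem ?_)
      · unfold Cyc6; omega
      · exact Finset.mem_union_left _ (Finset.mem_union_left _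
          (triple_mem_pairStar (by omega) (by omega) (by omega) (by simp) (by simp)))
    exfalso
    refine hwin (Finset.mem_image.2 ⟨x, Finset.mem_univ _, ?_⟩)
    ext j
    simp only [window, Finset.mem_filter, Finset.mem_univ, true_and, Finset.mem_insert,
      Finset.mem_singleton]
    omega
  · have h1 := card_pairStar_le hot
    have h2 := card_pairStar_le how
    have h3 := card_pairStar_le htw
    have h4 := card_pairStar_le (show o ≠ m by omega)
    have h5 := card_pairStar_le (show t ≠ m by omega)
    have h6 : ((univ : Finset (Fin n)).image window).card ≤ n :=
      Finset.card_image_le.trans (by simp)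
    refine (Finset.card_union_le _ _).trans ?_
    have k1 := Finset.card_union_le
      (pairStar o t ∪ pairStar o w ∪ pairStar t w ∪ pairStar o m) (pairStar t m)
    have k2 := Finset.card_union_le
      (pairStar o t ∪ pairStar o w ∪ pairStar t w) (pairStar o m)
    have k3 := Finset.card_union_le (pairStar o t ∪ pairStar o w) (pairStar t w)
    have k4 := Finset.card_union_le (pairStar o t) (pairStar o w)
    omega

/-! ### Every saturated family has linearly many edges -/

/-- A triple of isolated vertices cannot complete a copy of two edges that share a vertex, so a
saturated family covers all but at most two vertices. -/
theorem le_card_of_shared {m : ℕ} {E₁ E₂ : Finset (Fin m)} {v : Fin m}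
    (h₁ : v ∈ E₁) (h₂ : v ∈ E₂) (hne : E₁ ≠ E₂)
    {n : ℕ} {H : Finset (Finset (Fin n))} (hH : IsSat ⟨m, {E₁, E₂}⟩ 3 H) : n ≤ 3 * H.card + 2 := by
  obtain ⟨hu, hfree, hsat⟩ := hH
  by_contra! hlt
  have hcov : (H.biUnion id).card ≤ H.card * 3 :=
    Finset.card_biUnion_le_card_mul _ _ _ fun h hh => (hu h hh).le
  have hcompl := Finset.card_compl (H.biUnion id)
  rw [Fintype.card_fin] at hcompl
  obtain ⟨e, he, he3⟩ := Finset.exists_subset_card_eq (show 3 ≤ (H.biUnion id)ᶜ.card by omega)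
  have hiso : ∀ h ∈ H, ∀ p ∈ h, p ∉ e := by
    intro h hh p hp hpe
    have := he hpe
    simp only [Finset.mem_compl, Finset.mem_biUnion, id, not_exists, not_and] at this
    exact this h hh hp
  have heH : e ∉ H := by
    intro h
    obtain ⟨p, hp⟩ := Finset.card_pos.1 (by omega : 0 < e.card)
    exact hiso e h p hp hp
  obtain ⟨f, hf, hc, g1, g2⟩ := hasCopy_pair.1 (hsat e he3 heH)
  rw [Finset.mem_insert] at g1 g2
  have v1 := Finset.mem_image_of_mem f h₁
  have v2 := Finset.mem_image_of_mem f h₂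
  rcases g1 with g1 | g1 <;> rcases g2 with g2 | g2
  · exact hne (Finset.image_injective hf (g1.trans g2.symm))
  · exact hiso _ g2 _ v2 (g1 ▸ v1)
  · exact hiso _ g1 _ v1 (g2 ▸ v2)
  · exact hfree (hasCopy_pair.2 ⟨f, hf, hc, g1, g2⟩)

theorem mem_window {n : ℕ} {i j : Fin n} : j ∈ window i ↔ i ≤ j ∧ j.val ≤ i.val + 2 := by
  simp [window]

theorem card_window {n : ℕ} {i : Fin n} (hi : i.val + 2 < n) : (window i).card = 3 := by
  refine Finset.card_eq_three.2 ⟨i, ⟨i.val + 1, by omega⟩, ⟨i.val + 2, hi⟩, ?_, ?_, ?_, ?_⟩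
  · simp [Fin.ext_iff]
  · simp [Fin.ext_iff]
  · simp [Fin.ext_iff]
  · ext j
    simp only [mem_window, Finset.mem_insert, Finset.mem_singleton, Fin.ext_iff, Fin.le_def]
    omega

/-- In `M₂` both edges are separated by vertices of the other on two of their three arcs, so neither
edge can be a triple of consecutive points; adding such a triple never creates a copy. -/
theorem window_mem_of_isSat {n : ℕ} {H : Finset (Finset (Fin n))} (hH : IsSat M2cgh 3 H)
    {i : Fin n} (hi : i.val + 2 < n) : window i ∈ H := by
  obtain ⟨hu, hfree, hsat⟩ := hH
  by_contra hni
  obtain ⟨f, hf, hc, g1, g2⟩ := hasCopy_pair.1 (hsat _ (card_window hi) hni)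
  have hcyc := cyc6_of_cyclicSorted hc
  rw [Finset.mem_insert] at g1 g2
  have key : ∀ a b c d e g : Fin n, Cyc6 a b c d e g →
      ¬ (a ∈ window i ∧ b ∈ window i ∧ d ∈ window i) ∧
      ¬ (c ∈ window i ∧ e ∈ window i ∧ g ∈ window i) := by
    intro a b c d e g h
    simp only [mem_window]
    unfold Cyc6 at h
    constructor <;> intro h' <;> omega
  obtain ⟨k1, k2⟩ := key _ _ _ _ _ _ hcyc
  rcases g1 with g1 | g1
  · exact k1 (by rw [← g1]; refine ⟨?_, ?_, ?_⟩ <;> exact Finset.mem_image_of_mem f (by decide))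
  rcases g2 with g2 | g2
  · exact k2 (by rw [← g2]; refine ⟨?_, ?_, ?_⟩ <;> exact Finset.mem_image_of_mem f (by decide))
  exact hfree (hasCopy_pair.2 ⟨f, hf, hc, g1, g2⟩)

theorem le_card_M2 {n : ℕ} {H : Finset (Finset (Fin n))} (hH : IsSat M2cgh 3 H) :
    n ≤ H.card + 2 := by
  have h : (univ : Finset (Fin (n - 2))).card ≤ H.card := by
    refine Finset.card_le_card_of_injOn (fun i => window (⟨i.val, by omega⟩ : Fin n)) ?_ ?_
    · intro i _
      exact window_mem_of_isSat hH (by simp; omega)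
    · intro i _ j _ hij
      have h1 : (⟨i.val, by omega⟩ : Fin n) ∈ window (⟨i.val, by omega⟩ : Fin n) := by
        simp [mem_window]
      have h2 : (⟨j.val, by omega⟩ : Fin n) ∈ window (⟨j.val, by omega⟩ : Fin n) := by
        simp [mem_window]
      simp only at hij
      rw [hij, mem_window, Fin.le_def] at h1
      rw [← hij, mem_window, Fin.le_def] at h2
      simp only at h1 h2
      ext
      omega
  simp at h
  omega

/-- The infimum defining `satNum` is attained as soon as some saturated family exists. -/
theorem satNum_spec {F : CGH} {n K : ℕ}
    (h : ∃ H : Finset (Finset (Fin n)), IsSat F 3 H ∧ H.card ≤ K) :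
    satNum F 3 n ≤ K ∧ ∃ H : Finset (Finset (Fin n)), IsSat F 3 H ∧ H.card = satNum F 3 n := by
  obtain ⟨H, hH, hK⟩ := h
  have hmem : H.card ∈ {k | ∃ H : Finset (Finset (Fin n)), IsSat F 3 H ∧ H.card = k} :=
    ⟨H, hH, rfl⟩
  exact ⟨(Nat.sInf_le hmem).trans hK, Nat.sInf_mem ⟨_, hmem⟩⟩

-- STATEMENT 3
theorem sat_linear_order : ∃ c C : ℝ, 0 < c ∧ 0 < C ∧ ∃ N : ℕ, ∀ n : ℕ, N ≤ n →
    (c * n ≤ (satNum M2cgh 3 n : ℝ) ∧ (satNum M2cgh 3 n : ℝ) ≤ C * n) ∧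
    (c * n ≤ (satNum S1cgh 3 n : ℝ) ∧ (satNum S1cgh 3 n : ℝ) ≤ C * n) ∧
    (c * n ≤ (satNum S2cgh 3 n : ℝ) ∧ (satNum S2cgh 3 n : ℝ) ≤ C * n) := by
  refine ⟨1 / 6, 6, by norm_num, by norm_num, 10, fun n hn => ?_⟩
  obtain ⟨uM, HM, hM, eM⟩ := satNum_spec (upper_M2 hn)
  obtain ⟨u1, H1, h1, e1⟩ := satNum_spec (upper_S1 hn)
  obtain ⟨u2, H2, h2, e2⟩ := satNum_spec (upper_S2 hn)
  have lM := le_card_M2 hM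
  have l1 := le_card_of_shared (E₁ := ({0, 1, 4} : Finset (Fin 5))) (E₂ := ({0, 2, 3} : Finset (Fin 5)))
    (v := 0) (by decide) (by decide) (by decide) h1
  have l2 := le_card_of_shared (E₁ := ({0, 1, 2} : Finset (Fin 5))) (E₂ := ({0, 3, 4} : Finset (Fin 5)))
    (v := 0) (by decide) (by decide) (by decide) h2
  rw [eM] at lM
  rw [e1] at l1
  rw [e2] at l2
  have cast : ∀ s : ℕ, s ≤ 6 * n → n ≤ 6 * s → 1 / 6 * (n : ℝ) ≤ s ∧ (s : ℝ) ≤ 6 * n := by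
    intro s ha hb
    have ha' : (s : ℝ) ≤ 6 * n := by exact_mod_cast ha
    have hb' : (n : ℝ) ≤ 6 * s := by exact_mod_cast hb
    exact ⟨by linarith, ha'⟩
  exact ⟨cast _ uM (by omega), cast _ (by omega) (by omega), cast _ (by omega) (by omega)⟩
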